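/- For every Φ ∈ χ, every a ∈ ℂ, every g ∈ SL₂(ℤ), and every j ∈ {1,...,n}: 𝒟_j(a)(Φ|_{g,a}) = (𝒟_j(a)Φ)|_{g,a+2}, as an identity of families of functions on U. -/

import Mathlib

open Complex Real

/-- The Weierstrass function `℘₁(z;τ)`. -/
noncomputable def wp1 (z τ : ℂ) : ℂ :=
  1 / z + ∑' p : {p : ℤ × ℤ // p ≠ (0, 0)},
    (1 / (z - ((p.1.1 : ℂ) * τ + (p.1.2 : ℂ))) + 1 / ((p.1.1 : ℂ) * τ + (p.1.2 : ℂ)) +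
      z / ((p.1.1 : ℂ) * τ + (p.1.2 : ℂ)) ^ 2)

/-- The quasimodular Eisenstein series
`G₂(τ) = π²/3 + Σ_{m≠0} Σ_{l∈ℤ} (mτ+l)^{-2}` (iterated sum). -/
noncomputable def G2 (τ : ℂ) : ℂ :=
  (Real.pi : ℂ) ^ 2 / 3 +
    ∑' m : {m : ℤ // m ≠ 0}, ∑' l : ℤ, 1 / (((m : ℤ) : ℂ) * τ + (l : ℂ)) ^ 2

/-- The domain `U = {(z₁,...,z_n,τ) : Im τ > 0, z_i − z_j ∉ Λ_τ for i ≠ j}`. -/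
def Uset (n : ℕ) : Set ((Fin n → ℂ) × ℂ) :=
  {p | 0 < p.2.im ∧ ∀ i j : Fin n, i ≠ j → ∀ k l : ℤ,
    p.1 i - p.1 j ≠ (k : ℂ) * p.2 + (l : ℂ)}

/-- The componentwise differential operator `𝒟_j(a)` acting on families
`Φ = (φ_μ)_{μ∈ℕⁿ}` of functions of `(z₁,...,z_n; τ)`:
`(𝒟_j(a)Φ)_μ = 2πi·∂φ_μ/∂τ + G₂(τ)·(a·φ_μ + Σ_i φ_{μ+e_i})
+ G₂(τ)·Σ_i z_i·∂φ_μ/∂z_i − Σ_{i≠j} ℘₁(z_i−z_j;τ)·∂φ_μ/∂z_i`. -/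
noncomputable def DOp (n : ℕ) (a : ℂ) (j : Fin n)
    (Φ : (Fin n → ℕ) → (Fin n → ℂ) → ℂ → ℂ) :
    (Fin n → ℕ) → (Fin n → ℂ) → ℂ → ℂ :=
  fun μ z τ =>
    2 * Real.pi * Complex.I * deriv (fun t => Φ μ z t) τ +
      G2 τ * (a * Φ μ z τ + ∑ i : Fin n, Φ (μ + Pi.single i 1) z τ) +
      G2 τ * ∑ i : Fin n, z i * deriv (fun s => Φ μ (Function.update z i s) τ) (z i) -
      ∑ i ∈ Finset.univ.filter (fun i : Fin n => i ≠ j),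
        wp1 (z i - z j) τ * deriv (fun s => Φ μ (Function.update z i s) τ) (z i)

/-- The slash action `Φ ↦ Φ|_{g,a}` of `SL₂(ℤ)` on families `Φ = (φ_μ)_{μ∈ℕⁿ}`:
`(Φ|_{g,a})_μ(z;τ) = (Cτ+D)^{−a}·Σ_ν ((−log(Cτ+D))^{|ν|}/ν!)·φ_{μ+ν}(z/(Cτ+D); (Aτ+B)/(Cτ+D))`,
with principal branches of powers and logarithms. -/
noncomputable def SlashAct (n : ℕ) (g : Matrix.SpecialLinearGroup (Fin 2) ℤ) (a : ℂ)
    (Φ : (Fin n → ℕ) → (Fin n → ℂ) → ℂ → ℂ) :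
    (Fin n → ℕ) → (Fin n → ℂ) → ℂ → ℂ :=
  fun μ z τ =>
    ((g 1 0 : ℤ) * τ + (g 1 1 : ℤ)) ^ (-a) *
      ∑' ν : Fin n → ℕ,
        ((-Complex.log ((g 1 0 : ℤ) * τ + (g 1 1 : ℤ))) ^ (∑ i : Fin n, ν i) /
            ∏ i : Fin n, (Nat.factorial (ν i) : ℂ)) *
          Φ (μ + ν) (fun i => z i / ((g 1 0 : ℤ) * τ + (g 1 1 : ℤ)))
            (((g 0 0 : ℤ) * τ + (g 0 1 : ℤ)) / ((g 1 0 : ℤ) * τ + (g 1 1 : ℤ)))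


theorem mobius_linear_eq (g : Matrix.SpecialLinearGroup (Fin 2) ℤ) {τ : ℂ}
    (hJ : ((g 1 0 : ℤ) : ℂ) * τ + (g 1 1 : ℤ) ≠ 0) (k l : ℤ) :
    (k : ℂ) * ((((g 0 0 : ℤ) : ℂ) * τ + (g 0 1 : ℤ)) / (((g 1 0 : ℤ) : ℂ) * τ + (g 1 1 : ℤ))) + l =
      (((k * g 0 0 + l * g 1 0 : ℤ) : ℂ) * τ + ((k * g 0 1 + l * g 1 1 : ℤ) : ℂ)) /
        (((g 1 0 : ℤ) : ℂ) * τ + (g 1 1 : ℤ)) := by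
  rw [eq_div_iff hJ, add_mul, mul_assoc, div_mul_cancel₀ _ hJ]
  push_cast
  ring

/-- Right multiplication by `g` on the nonzero vectors of `ℤ²`. -/
def vecMulEquiv (g : Matrix.SpecialLinearGroup (Fin 2) ℤ) :
    {p : ℤ × ℤ // p ≠ (0, 0)} ≃ {p : ℤ × ℤ // p ≠ (0, 0)} :=
  Equiv.subtypeEquiv
    { toFun := fun p => (p.1 * g 0 0 + p.2 * g 1 0, p.1 * g 0 1 + p.2 * g 1 1)
      invFun := fun p => (p.1 * g 1 1 - p.2 * g 1 0, p.2 * g 0 0 - p.1 * g 0 1)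
      left_inv := fun p => by
        have h := g.det_coe
        rw [Matrix.det_fin_two] at h
        ext
        · linear_combination p.1 * h
        · linear_combination p.2 * h
      right_inv := fun p => by
        have h := g.det_coe
        rw [Matrix.det_fin_two] at h
        ext
        · linear_combination p.1 * h
        · linear_combination p.2 * h }
    (fun p => by
      have h := g.det_coe
      rw [Matrix.det_fin_two] at h
      simp only [Equiv.coe_fn_mk, ne_eq, Prod.ext_iff, not_iff_not]
      constructor
      · rintro ⟨h1, h2⟩
        simp [h1, h2]
      · rintro ⟨h1, h2⟩
        constructor
        · linear_combination g 1 1 * h1 - g 1 0 * h2 - p.1 * h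
        · linear_combination g 0 0 * h2 - g 0 1 * h1 - p.2 * h)

theorem wp1_summand_div {J : ℂ} (hJ : J ≠ 0) (z w : ℂ) :
    1 / (z / J - w / J) + 1 / (w / J) + z / J / (w / J) ^ 2 =
      J * (1 / (z - w) + 1 / w + z / w ^ 2) := by
  have h : z / J / (w / J) ^ 2 = J * (z / w ^ 2) := by
    rw [div_pow, div_div_div_eq, show z * J ^ 2 = J * (J * z) by ring, mul_div_mul_left _ _ hJ,
      mul_div_assoc]
  rw [← sub_div, one_div_div, one_div_div, h]
  ring

theorem wp1_mobius (g : Matrix.SpecialLinearGroup (Fin 2) ℤ) {τ : ℂ}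
    (hJ : ((g 1 0 : ℤ) : ℂ) * τ + (g 1 1 : ℤ) ≠ 0) (z : ℂ) :
    wp1 (z / (((g 1 0 : ℤ) : ℂ) * τ + (g 1 1 : ℤ)))
        ((((g 0 0 : ℤ) : ℂ) * τ + (g 0 1 : ℤ)) / (((g 1 0 : ℤ) : ℂ) * τ + (g 1 1 : ℤ))) =
      (((g 1 0 : ℤ) : ℂ) * τ + (g 1 1 : ℤ)) * wp1 z τ := by
  unfold wp1
  simp_rw [mobius_linear_eq g hJ]
  rw [mul_add, ← tsum_mul_left]
  refine congrArg₂ _ (by rw [one_div_div, mul_one_div])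
    ((tsum_congr fun p => ?_).trans ((vecMulEquiv g).tsum_eq _))
  exact wp1_summand_div hJ z _

theorem isOpen_Uset (n : ℕ) : IsOpen (Uset n) := by
  let H : Set ((Fin n → ℂ) × ℂ) := {p | 0 < p.2.im}
  have hH : IsOpen H := isOpen_lt continuous_const (by fun_prop)
  let f : Fin n → Fin n → (Fin n → ℂ) × ℂ → ℝ × ℝ := fun i j p =>
    ((p.1 i - p.1 j).im / p.2.im, (p.1 i - p.1 j).re - (p.1 i - p.1 j).im / p.2.im * p.2.re)
  have hf : ∀ i j, ContinuousOn (f i j) H := fun i j => by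
    have h : ContinuousOn (fun p : (Fin n → ℂ) × ℂ => (p.1 i - p.1 j).im / p.2.im) H :=
      ContinuousOn.div (by fun_prop) (by fun_prop) fun p hp => ne_of_gt hp
    exact h.prodMk (ContinuousOn.sub (by fun_prop) (h.mul (by fun_prop)))
  let L : Set (ℝ × ℝ) := Set.range ((↑) : ℤ → ℝ) ×ˢ Set.range ((↑) : ℤ → ℝ)
  have hL : IsClosed L := Int.isClosedEmbedding_coe_real.isClosed_range.prod
    Int.isClosedEmbedding_coe_real.isClosed_range
  have key : Uset n = H ∩ ⋂ i, ⋂ j, {p | i ≠ j → p ∈ H ∩ f i j ⁻¹' Lᶜ} := by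
    ext p
    simp only [Uset, Set.mem_inter_iff, Set.mem_iInter, Set.mem_ofPred_eq]
    refine and_congr_right fun hp => forall_congr' fun i => forall_congr' fun j =>
      imp_congr_right fun _ => ?_
    simp only [Set.mem_preimage, Set.mem_compl_iff, L, f, Set.mem_prod, Set.mem_range, H,
      Set.mem_ofPred_eq, hp, true_and, not_and, not_exists, forall_exists_index]
    have e : ∀ k l : ℤ, p.1 i - p.1 j = (k : ℂ) * p.2 + l ↔
        (k : ℝ) = (p.1 i - p.1 j).im / p.2.im ∧
          (l : ℝ) = (p.1 i - p.1 j).re - (p.1 i - p.1 j).im / p.2.im * p.2.re := fun k l => by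
      rw [Complex.ext_iff, eq_div_iff hp.ne']
      simp only [Complex.add_re, Complex.add_im, Complex.mul_re, Complex.mul_im,
        Complex.intCast_re, Complex.intCast_im, zero_mul, sub_zero, add_zero]
      constructor
      · rintro ⟨h1, h2⟩
        rw [h1, h2, mul_div_cancel_right₀ _ hp.ne']
        exact ⟨rfl, by ring⟩
      · rintro ⟨h1, h2⟩
        rw [h2, ← h1, mul_div_cancel_right₀ _ hp.ne']
        exact ⟨by ring, rfl⟩
    constructor
    · intro h k hk l hl
      exact h k l ((e k l).2 ⟨hk, hl⟩)
    · intro h k l hkl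
      exact h k ((e k l).1 hkl).1 l ((e k l).1 hkl).2
  rw [key]
  refine hH.inter (isOpen_iInter_of_finite fun i => isOpen_iInter_of_finite fun j => ?_)
  by_cases hij : i = j
  · simp [hij]
  · convert (hf i j).isOpen_inter_preimage hH hL.isOpen_compl using 1
    ext p
    simp [hij]

open EisensteinSeries in
theorem e2Summand_eq_tsum (z : UpperHalfPlane) {m : ℤ} (hm : m ≠ 0) :
    e2Summand m z = ∑' l : ℤ, (((m : ℂ) * z + l) ^ 2 * ((m : ℂ) * z + l + 1))⁻¹ := by
  have h0 := tsum_symmetricIco_linear_sub_linear_add_one_eq_zero z m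
  have hs := summable_right_one_div_linear_sub_one_div_linear_succ z m
  rw [tsum_eq_of_summable_unconditional hs] at h0
  rw [← sub_zero (e2Summand m z), ← h0, e2Summand, ← (e2Summand_summable m z).tsum_sub hs]
  refine tsum_congr fun l => ?_
  have h1 : (m : ℂ) * z + l ≠ 0 := by
    simpa using UpperHalfPlane.linear_ne_zero (cd := ![(m : ℝ), l]) z (by simp [hm])
  have h2 : (m : ℂ) * z + l + 1 ≠ 0 := by
    simpa [add_assoc] using
      UpperHalfPlane.linear_ne_zero (cd := ![(m : ℝ), (l + 1 : ℝ)]) z (by simp [hm])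
  simp only [eisSummand, Matrix.cons_val_zero, Matrix.cons_val_one, zpow_neg, zpow_ofNat]
  field_simp
  ring

open EisensteinSeries in
theorem summable_e2Summand (z : UpperHalfPlane) : Summable (e2Summand · z) := by
  have H : Summable fun m : Fin 2 → ℤ =>
      (((m 0 : ℂ) * z + m 1) ^ 2 * ((m 0 : ℂ) * z + m 1 + 1))⁻¹ := by
    apply summable_of_isBigO_rpow_norm (a := 3) (by norm_num)
    simpa [pow_three, pow_two, ← mul_assoc] using ((isBigO_linear_add_const_vec z 0 1).mul
      (isBigO_linear_add_const_vec z 0 0)).mul (isBigO_linear_add_const_vec z 0 0)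
  have H' := ((finTwoArrowEquiv ℤ).symm.summable_iff.mpr H).prod
  refine H'.congr_cofinite ?_
  filter_upwards [Filter.eventually_cofinite_ne (0 : ℤ)] with m hm
  rw [e2Summand_eq_tsum z hm]
  rfl

theorem G2_coe_upperHalfPlane (z : UpperHalfPlane) : G2 (z : ℂ) = EisensteinSeries.G2 z := by
  rw [EisensteinSeries.G2, tsum_eq_of_summable_unconditional (summable_e2Summand z),
    ← (summable_e2Summand z).sum_add_tsum_subtype_compl {0}, Finset.sum_singleton,
    EisensteinSeries.e2Summand_zero_eq_two_riemannZeta_two, riemannZeta_two, G2]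
  congr 1
  · ring
  · have h : ∀ m : ℤ, m ≠ 0 ↔ m ∉ ({0} : Finset ℤ) := by simp
    rw [← (Equiv.subtypeEquivRight h).tsum_eq]
    refine tsum_congr fun m => tsum_congr fun l => ?_
    simp [EisensteinSeries.eisSummand, zpow_ofNat]

theorem G2_mobius (g : Matrix.SpecialLinearGroup (Fin 2) ℤ) {τ : ℂ} (hτ : 0 < τ.im) :
    G2 ((((g 0 0 : ℤ) : ℂ) * τ + (g 0 1 : ℤ)) / (((g 1 0 : ℤ) : ℂ) * τ + (g 1 1 : ℤ))) =
      (((g 1 0 : ℤ) : ℂ) * τ + (g 1 1 : ℤ)) ^ 2 * G2 τ -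
        2 * Real.pi * Complex.I * (g 1 0 : ℤ) * (((g 1 0 : ℤ) : ℂ) * τ + (g 1 1 : ℤ)) := by
  let z : UpperHalfPlane := ⟨τ, hτ⟩
  have h := congrFun (EisensteinSeries.G2_slash_action g) z
  have hJ : UpperHalfPlane.denom g z = ((g 1 0 : ℤ) : ℂ) * τ + (g 1 1 : ℤ) :=
    ModularGroup.denom_apply g z
  have hne : UpperHalfPlane.denom g z ≠ 0 := UpperHalfPlane.denom_ne_zero g z
  rw [ModularForm.SL_slash_apply, Pi.sub_apply, ← G2_coe_upperHalfPlane, ← G2_coe_upperHalfPlane,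
    EisensteinSeries.D2, hJ, UpperHalfPlane.specialLinearGroup_apply] at h
  rw [hJ] at hne
  simp only [eq_intCast, Complex.ofReal_intCast, zpow_neg, zpow_ofNat,
    show (z : ℂ) = τ from rfl, algebraMap_int_eq] at h
  generalize ((g 1 0 : ℤ) : ℂ) * τ + (g 1 1 : ℤ) = J at *
  field_simp at h
  linear_combination h

theorem mobius_mem_Uset {n : ℕ} (g : Matrix.SpecialLinearGroup (Fin 2) ℤ) {z : Fin n → ℂ} {τ : ℂ}
    (h : (z, τ) ∈ Uset n) :
    ((fun i => z i / (((g 1 0 : ℤ) : ℂ) * τ + (g 1 1 : ℤ)),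
      (((g 0 0 : ℤ) : ℂ) * τ + (g 0 1 : ℤ)) / (((g 1 0 : ℤ) : ℂ) * τ + (g 1 1 : ℤ))) :
        (Fin n → ℂ) × ℂ) ∈ Uset n := by
  let τ' : UpperHalfPlane := ⟨τ, h.1⟩
  have hJ : ((g 1 0 : ℤ) : ℂ) * τ + (g 1 1 : ℤ) ≠ 0 :=
    (ModularGroup.denom_apply g τ') ▸ UpperHalfPlane.denom_ne_zero g τ'
  refine ⟨?_, fun i j hij k l => ?_⟩
  · have := (g • τ').im_pos
    rw [← UpperHalfPlane.coe_im, UpperHalfPlane.specialLinearGroup_apply] at this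
    simpa using this
  · rw [mobius_linear_eq g hJ]
    simp only [← sub_div]
    rw [Ne, div_left_inj' hJ]
    exact h.2 i j hij _ _

/-- The total differential of a function of `(z₁,…,z_n;τ)` in terms of its partial derivatives. -/
theorem fderiv_apply_eq_sum_deriv {n : ℕ} {φ : (Fin n → ℂ) → ℂ → ℂ} {w : Fin n → ℂ} {σ : ℂ}
    {L : (Fin n → ℂ) × ℂ →L[ℂ] ℂ}
    (hL : HasFDerivAt (fun p : (Fin n → ℂ) × ℂ => φ p.1 p.2) L (w, σ)) (u : Fin n → ℂ) (s : ℂ) :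
    L (u, s) = s * deriv (fun t => φ w t) σ +
      ∑ i, u i * deriv (fun t => φ (Function.update w i t) σ) (w i) := by
  have h1 : deriv (fun t => φ w t) σ = L (0, 1) :=
    (hL.comp_hasDerivAt σ ((hasDerivAt_const σ w).prodMk (hasDerivAt_id σ))).deriv
  have h2 : ∀ i, deriv (fun t => φ (Function.update w i t) σ) (w i) = L (Pi.single i 1, 0) := by
    intro i
    have hw : HasDerivAt (fun t => (Function.update w i t, σ)) (Pi.single i (1 : ℂ), 0) (w i) :=
      (hasDerivAt_update w i (w i)).prodMk (hasDerivAt_const _ _)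
    have hL' : HasFDerivAt (fun p : (Fin n → ℂ) × ℂ => φ p.1 p.2) L
        (Function.update w i (w i), σ) := by
      simpa using hL
    exact (hL'.comp_hasDerivAt (w i) hw).deriv
  have h3 : (u, s) = s • ((0, 1) : (Fin n → ℂ) × ℂ) +
      ∑ i, u i • ((Pi.single i 1, 0) : (Fin n → ℂ) × ℂ) := by
    ext k
    · simp [Prod.fst_sum, Finset.sum_apply, Pi.single_apply]
    · simp [Prod.snd_sum]
  rw [h3, map_add, map_smul, map_sum, h1]
  simp only [map_smul, h2, smul_eq_mul]

theorem hasDerivAt_comp_mobius {n : ℕ} {φ : (Fin n → ℂ) → ℂ → ℂ} {A B C D : ℂ}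
    (hdet : A * D - B * C = 1) {z : Fin n → ℂ} {τ : ℂ} (hJ : C * τ + D ≠ 0)
    (hφ : DifferentiableAt ℂ (fun p : (Fin n → ℂ) × ℂ => φ p.1 p.2)
      (fun i => z i / (C * τ + D), (A * τ + B) / (C * τ + D))) :
    HasDerivAt (fun t => φ (fun i => z i / (C * t + D)) ((A * t + B) / (C * t + D)))
      (1 / (C * τ + D) ^ 2 *
          deriv (fun t => φ (fun i => z i / (C * τ + D)) t) ((A * τ + B) / (C * τ + D)) -
        C / (C * τ + D) * ∑ i, z i / (C * τ + D) *
          deriv (fun s => φ (Function.update (fun k => z k / (C * τ + D)) i s)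
            ((A * τ + B) / (C * τ + D))) (z i / (C * τ + D))) τ := by
  have lin : ∀ a b : ℂ, HasDerivAt (fun t => a * t + b) a τ := fun a b => by
    simpa using ((hasDerivAt_id τ).const_mul a).add_const b
  have hw : HasDerivAt (fun t => fun i => z i / (C * t + D))
      (fun i => -(C / (C * τ + D)) * (z i / (C * τ + D))) τ := by
    refine hasDerivAt_pi.2 fun i => ?_
    refine ((hasDerivAt_const τ (z i)).div (lin C D) hJ).congr_deriv ?_
    field_simp
    ring
  have hM : HasDerivAt (fun t => (A * t + B) / (C * t + D)) (1 / (C * τ + D) ^ 2) τ := by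
    refine ((lin A B).div (lin C D) hJ).congr_deriv ?_
    congr 1
    linear_combination hdet
  have h := hφ.hasFDerivAt.comp_hasDerivAt τ (hw.prodMk hM)
  rw [fderiv_apply_eq_sum_deriv hφ.hasFDerivAt] at h
  refine h.congr_deriv ?_
  rw [sub_eq_add_neg, ← neg_mul, Finset.mul_sum]
  simp only [mul_assoc]

theorem hasDerivAt_comp_update_div {n : ℕ} {φ : (Fin n → ℂ) → ℂ → ℂ} {J σ : ℂ} {z : Fin n → ℂ}
    (hφ : DifferentiableAt ℂ (fun p : (Fin n → ℂ) × ℂ => φ p.1 p.2) (fun i => z i / J, σ))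
    (i : Fin n) :
    HasDerivAt (fun s => φ (fun k => Function.update z i s k / J) σ)
      (deriv (fun s => φ (Function.update (fun k => z k / J) i s) σ) (z i / J) / J) (z i) := by
  have hw : HasDerivAt (fun s => ((fun k => Function.update z i s k / J), σ))
      ((fun k => Pi.single (M := fun _ => ℂ) i (1 : ℂ) k / J), 0) (z i) :=
    (hasDerivAt_pi.2 fun k => (hasDerivAt_pi.1 (hasDerivAt_update z i (z i)) k).div_const J).prodMk
      (hasDerivAt_const _ _)
  have hφ' : HasFDerivAt (fun p : (Fin n → ℂ) × ℂ => φ p.1 p.2)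
      (fderiv ℂ (fun p : (Fin n → ℂ) × ℂ => φ p.1 p.2) (fun i => z i / J, σ))
      (fun k => Function.update z i (z i) k / J, σ) := by
    simpa using hφ.hasFDerivAt
  have h := hφ'.comp_hasDerivAt (z i) hw
  rw [fderiv_apply_eq_sum_deriv hφ.hasFDerivAt] at h
  refine h.congr_deriv ?_
  rw [zero_mul, zero_add, Finset.sum_eq_single i]
  · simp [div_eq_inv_mul]
  · intro k _ hk
    simp [hk]
  · simp

/-- The coefficient `x^{|ν|}/ν!` of the multivariate exponential series. -/
noncomputable def expCoeff {n : ℕ} (x : ℂ) (ν : Fin n → ℕ) : ℂ :=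
  x ^ (∑ i, ν i) / ∏ i, (Nat.factorial (ν i) : ℂ)

theorem hasDerivAt_expCoeff {n : ℕ} (ν : Fin n → ℕ) (x : ℂ) :
    HasDerivAt (fun x => expCoeff x ν)
      (((∑ i, ν i : ℕ) : ℂ) * x ^ (∑ i, ν i - 1) / ∏ i, (Nat.factorial (ν i) : ℂ)) x :=
  (hasDerivAt_pow _ x).div_const _

theorem expCoeff_add_single {n : ℕ} (ν : Fin n → ℕ) (i : Fin n) (x : ℂ) :
    ((ν + Pi.single i 1 : Fin n → ℕ) i : ℂ) * x ^ (∑ k, (ν + Pi.single i 1 : Fin n → ℕ) k - 1) /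
      ∏ k, (Nat.factorial ((ν + Pi.single i 1 : Fin n → ℕ) k) : ℂ) = expCoeff x ν := by
  have hs : ∑ k, (ν + Pi.single i 1 : Fin n → ℕ) k = ∑ k, ν k + 1 := by
    simp [Finset.sum_add_distrib]
  have hp : ∏ k, (Nat.factorial ((ν + Pi.single i 1 : Fin n → ℕ) k) : ℂ) =
      ((ν i + 1 : ℕ) : ℂ) * ∏ k, (Nat.factorial (ν k) : ℂ) := by
    rw [← Finset.mul_prod_erase _ _ (Finset.mem_univ i),
      ← Finset.mul_prod_erase _ (fun k => (Nat.factorial (ν k) : ℂ)) (Finset.mem_univ i),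
      ← mul_assoc]
    congr 1
    · simp [Nat.factorial_succ]
    · refine Finset.prod_congr rfl fun k hk => ?_
      simp [Finset.ne_of_mem_erase hk]
  rw [hs, hp, expCoeff, Nat.add_sub_cancel]
  simp only [Pi.add_apply, Pi.single_eq_same]
  rw [mul_div_mul_left]
  exact Nat.cast_ne_zero.2 (Nat.succ_ne_zero _)

/-- Differentiating the generating series `∑ x^{|ν|}/ν! · f ν` shifts the coefficients `f`. -/
theorem sum_deriv_expCoeff_mul {n N : ℕ} (f : (Fin n → ℕ) → ℂ)
    (hf : ∀ ν : Fin n → ℕ, (∃ i, N ≤ ν i) → f ν = 0) (x : ℂ) :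
    ∑ ν ∈ Fintype.piFinset (fun _ : Fin n => Finset.range N),
        ((∑ i, ν i : ℕ) : ℂ) * x ^ (∑ i, ν i - 1) / (∏ i, (Nat.factorial (ν i) : ℂ)) * f ν =
      ∑ ν ∈ Fintype.piFinset (fun _ : Fin n => Finset.range N),
        expCoeff x ν * ∑ i, f (ν + Pi.single i 1) := by
  have h : ∀ i : Fin n, ∑ ν ∈ Fintype.piFinset (fun _ : Fin n => Finset.range N),
        (ν i : ℂ) * x ^ (∑ i, ν i - 1) / (∏ i, (Nat.factorial (ν i) : ℂ)) * f ν =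
      ∑ ν ∈ Fintype.piFinset (fun _ : Fin n => Finset.range N),
        expCoeff x ν * f (ν + Pi.single i 1) := by
    intro i
    rw [← tsum_eq_sum (L := .unconditional _), ← tsum_eq_sum (L := .unconditional _),
      ← (add_left_injective (Pi.single i 1)).tsum_eq]
    · simp only [expCoeff_add_single]
    · intro ν hν
      have hi : ν i ≠ 0 := by
        rintro h0
        simp [h0] at hν
      refine ⟨ν - Pi.single i 1, tsub_add_cancel_of_le fun k => ?_⟩
      by_cases hk : k = i
      · subst hk
        simpa using Nat.one_le_iff_ne_zero.2 hi
      · simp [hk]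
    · intro ν hν
      simp only [Fintype.mem_piFinset, Finset.mem_range, not_forall, not_lt] at hν
      obtain ⟨k, hk⟩ := hν
      rw [hf _ ⟨k, hk.trans (by simp)⟩, mul_zero]
    · intro ν hν
      simp only [Fintype.mem_piFinset, Finset.mem_range, not_forall, not_lt] at hν
      rw [hf _ hν, mul_zero]
  simp only [Finset.mul_sum]
  rw [Finset.sum_comm, ← Finset.sum_congr rfl fun i _ => h i, Finset.sum_comm]
  refine Finset.sum_congr rfl fun ν _ => ?_
  rw [← Finset.sum_mul, ← Finset.sum_div, ← Finset.sum_mul, Nat.cast_sum]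

/-- The automorphy factor `(Cτ+D)^{-a}·(−log(Cτ+D))^{|ν|}/ν!` and its derivative. -/
theorem hasDerivAt_automorphyFactor {n : ℕ} {C D τ : ℂ} (hJ : C * τ + D ≠ 0)
    (hslit : C = 0 ∨ C * τ + D ∈ Complex.slitPlane) (a : ℂ) (ν : Fin n → ℕ) :
    HasDerivAt (fun t => (C * t + D) ^ (-a) * expCoeff (-Complex.log (C * t + D)) ν)
      ((C * τ + D) ^ (-a) * (-(C / (C * τ + D)) * (a * expCoeff (-Complex.log (C * τ + D)) ν +
        ((∑ i, ν i : ℕ) : ℂ) * (-Complex.log (C * τ + D)) ^ (∑ i, ν i - 1) /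
          ∏ i, (Nat.factorial (ν i) : ℂ)))) τ := by
  rcases hslit with rfl | hslit
  · simpa using hasDerivAt_const τ (D ^ (-a) * expCoeff (-Complex.log D) ν)
  · have lin : HasDerivAt (fun t => C * t + D) C τ := by
      simpa using ((hasDerivAt_id τ).const_mul C).add_const D
    have h1 := lin.cpow_const (c := -a) hslit
    have h2 := (hasDerivAt_expCoeff ν (-Complex.log (C * τ + D))).comp τ (lin.clog hslit).neg
    refine (h1.mul h2).congr_deriv ?_
    simp only [Function.comp_apply, Pi.neg_apply]
    rw [Complex.cpow_sub _ _ hJ, Complex.cpow_one]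
    ring

theorem SlashAct_eq_sum {n N : ℕ} (g : Matrix.SpecialLinearGroup (Fin 2) ℤ) (a : ℂ)
    {Φ : (Fin n → ℕ) → (Fin n → ℂ) → ℂ → ℂ}
    (hΦ : ∀ μ : Fin n → ℕ, (∃ i, N ≤ μ i) → Φ μ = 0) (μ : Fin n → ℕ) (z : Fin n → ℂ) (τ : ℂ) :
    SlashAct n g a Φ μ z τ = ∑ ν ∈ Fintype.piFinset (fun _ : Fin n => Finset.range N),
      (((g 1 0 : ℤ) : ℂ) * τ + (g 1 1 : ℤ)) ^ (-a) *
        expCoeff (-Complex.log (((g 1 0 : ℤ) : ℂ) * τ + (g 1 1 : ℤ))) ν *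
        Φ (μ + ν) (fun i => z i / (((g 1 0 : ℤ) : ℂ) * τ + (g 1 1 : ℤ)))
          ((((g 0 0 : ℤ) : ℂ) * τ + (g 0 1 : ℤ)) / (((g 1 0 : ℤ) : ℂ) * τ + (g 1 1 : ℤ))) := by
  rw [SlashAct, tsum_eq_sum (s := Fintype.piFinset (fun _ : Fin n => Finset.range N)),
    Finset.mul_sum]
  · exact Finset.sum_congr rfl fun ν _ => (mul_assoc _ _ _).symm
  · intro ν hν
    simp only [Fintype.mem_piFinset, Finset.mem_range, not_forall, not_lt] at hν
    obtain ⟨k, hk⟩ := hν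
    rw [hΦ _ ⟨k, hk.trans (by simp)⟩, Pi.zero_apply, Pi.zero_apply, mul_zero]

theorem DOp_eq_zero {n N : ℕ} (a : ℂ) (j : Fin n)
    {Φ : (Fin n → ℕ) → (Fin n → ℂ) → ℂ → ℂ}
    (hΦ : ∀ μ : Fin n → ℕ, (∃ i, N ≤ μ i) → Φ μ = 0) (μ : Fin n → ℕ) (hμ : ∃ i, N ≤ μ i) :
    DOp n a j Φ μ = 0 := by
  obtain ⟨k, hk⟩ := hμ
  have h : ∀ i, Φ (μ + Pi.single i 1) = 0 := fun i => hΦ _ ⟨k, hk.trans (by simp)⟩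
  funext z τ
  simp [DOp, h, hΦ μ ⟨k, hk⟩]

theorem sum_slash_identity {ι κ : Type*} (S : Finset ι) (T R : Finset κ) {J : ℂ} (hJ : J ≠ 0)
    (q C P a G : ℂ) (c c' F Ft : ι → ℂ) (Fs Fz : ι → κ → ℂ) (z W : κ → ℂ)
    (hshift : ∑ ν ∈ S, c' ν * F ν = ∑ ν ∈ S, c ν * ∑ i ∈ T, Fs ν i) :
    q * ∑ ν ∈ S, (P * (-(C / J) * (a * c ν + c' ν)) * F ν +
          P * c ν * (1 / J ^ 2 * Ft ν - C / J * ∑ i ∈ T, z i / J * Fz ν i)) +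
        G * (a * ∑ ν ∈ S, P * c ν * F ν + ∑ i ∈ T, ∑ ν ∈ S, P * c ν * Fs ν i) +
        G * ∑ i ∈ T, z i * ∑ ν ∈ S, P * c ν * (Fz ν i / J) -
        ∑ i ∈ R, W i * ∑ ν ∈ S, P * c ν * (Fz ν i / J) =
      ∑ ν ∈ S, P / J ^ 2 * c ν * (q * Ft ν +
        (J ^ 2 * G - q * C * J) * (a * F ν + ∑ i ∈ T, Fs ν i) +
        (J ^ 2 * G - q * C * J) * ∑ i ∈ T, z i / J * Fz ν i - ∑ i ∈ R, J * W i * Fz ν i) := by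
  have h1 : ∑ i ∈ T, ∑ ν ∈ S, P * c ν * Fs ν i = ∑ ν ∈ S, P * c ν * ∑ i ∈ T, Fs ν i := by
    rw [Finset.sum_comm]
    simp only [Finset.mul_sum]
  have h2 : ∑ i ∈ T, z i * ∑ ν ∈ S, P * c ν * (Fz ν i / J) =
      ∑ ν ∈ S, P * c ν * ∑ i ∈ T, z i / J * Fz ν i := by
    simp only [Finset.mul_sum]
    rw [Finset.sum_comm]
    exact Finset.sum_congr rfl fun ν _ => Finset.sum_congr rfl fun i _ => by ring
  have h3 : ∑ i ∈ R, W i * ∑ ν ∈ S, P * c ν * (Fz ν i / J) =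
      ∑ ν ∈ S, P * c ν / J ^ 2 * ∑ i ∈ R, J * W i * Fz ν i := by
    simp only [Finset.mul_sum]
    rw [Finset.sum_comm]
    exact Finset.sum_congr rfl fun ν _ => Finset.sum_congr rfl fun i _ => by field_simp
  have h4 : ∑ ν ∈ S, (-(q * P * C / J)) * (c' ν * F ν - c ν * ∑ i ∈ T, Fs ν i) = 0 := by
    rw [← Finset.mul_sum, Finset.sum_sub_distrib, hshift, sub_self, mul_zero]
  rw [h1, h2, h3, ← sub_eq_zero, ← h4]
  simp only [Finset.mul_sum (s := S), mul_add G, ← Finset.sum_add_distrib,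
    ← Finset.sum_sub_distrib]
  refine Finset.sum_congr rfl fun ν _ => ?_
  generalize ∑ i ∈ T, z i / J * Fz ν i = X
  generalize ∑ i ∈ R, J * W i * Fz ν i = Y
  field_simp
  ring

/-- For every `Φ ∈ χ` (a family of holomorphic functions on `U`, with components
vanishing for large indices), every `a ∈ ℂ`, every `g ∈ SL₂(ℤ)` and every `j`:
`𝒟_j(a)(Φ|_{g,a}) = (𝒟_j(a)Φ)|_{g,a+2}` on `U`. -/
theorem DOp_slash_commute (n : ℕ) (hn : 1 ≤ n)
    (Φ : (Fin n → ℕ) → (Fin n → ℂ) → ℂ → ℂ)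
    (hΦhol : ∀ μ, DifferentiableOn ℂ (fun p : (Fin n → ℂ) × ℂ => Φ μ p.1 p.2) (Uset n))
    (hΦfin : ∃ N : ℕ, ∀ μ : Fin n → ℕ, (∃ i, N ≤ μ i) → Φ μ = 0)
    (a : ℂ) (g : Matrix.SpecialLinearGroup (Fin 2) ℤ) (j : Fin n) :
    ∀ (z : Fin n → ℂ) (τ : ℂ), (z, τ) ∈ Uset n → ∀ μ : Fin n → ℕ,
      DOp n a j (SlashAct n g a Φ) μ z τ = SlashAct n g (a + 2) (DOp n a j Φ) μ z τ := by
  intro z τ hU μ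
  obtain ⟨N, hN⟩ := hΦfin
  have hdet : ((g 0 0 : ℤ) : ℂ) * (g 1 1 : ℤ) - (g 0 1 : ℤ) * (g 1 0 : ℤ) = 1 := by
    have h := g.det_coe
    rw [Matrix.det_fin_two] at h
    exact_mod_cast h
  have hJ : ((g 1 0 : ℤ) : ℂ) * τ + (g 1 1 : ℤ) ≠ 0 :=
    (ModularGroup.denom_apply g ⟨τ, hU.1⟩) ▸ UpperHalfPlane.denom_ne_zero g ⟨τ, hU.1⟩
  have hslit : ((g 1 0 : ℤ) : ℂ) = 0 ∨
      ((g 1 0 : ℤ) : ℂ) * τ + (g 1 1 : ℤ) ∈ Complex.slitPlane := by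
    refine or_iff_not_imp_left.2 fun hC => Or.inr ?_
    have hC' : ((g 1 0 : ℤ) : ℝ) ≠ 0 := by exact_mod_cast hC
    simpa using ⟨by exact_mod_cast hC', hU.1.ne'⟩
  have hG := G2_mobius g hU.1
  have hwp := wp1_mobius g hJ
  have hdiff : ∀ κ, DifferentiableAt ℂ (fun p : (Fin n → ℂ) × ℂ => Φ κ p.1 p.2) _ := fun κ =>
    (hΦhol κ).differentiableAt ((isOpen_Uset n).mem_nhds (mobius_mem_Uset g hU))
  rw [SlashAct_eq_sum g (a + 2) (DOp_eq_zero a j hN)]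
  simp only [DOp, SlashAct_eq_sum g a hN]
  have hτ := (HasDerivAt.fun_sum fun ν (_ : ν ∈ Fintype.piFinset fun _ : Fin n => Finset.range N) =>
    (hasDerivAt_automorphyFactor hJ hslit a ν).mul
      (hasDerivAt_comp_mobius hdet hJ (hdiff (μ + ν)))).deriv
  have hz : ∀ i, _ := fun i =>
    (HasDerivAt.fun_sum fun ν (_ : ν ∈ Fintype.piFinset fun _ : Fin n => Finset.range N) =>
      (hasDerivAt_comp_update_div (hdiff (μ + ν)) i).const_mul
        ((((g 1 0 : ℤ) : ℂ) * τ + (g 1 1 : ℤ)) ^ (-a) *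
          expCoeff (-Complex.log (((g 1 0 : ℤ) : ℂ) * τ + (g 1 1 : ℤ))) ν)).deriv
  simp only [Pi.mul_apply] at hτ
  rw [hτ]
  simp only [hz]
  have hshift := sum_deriv_expCoeff_mul (N := N)
    (fun ν => Φ (μ + ν) (fun i => z i / (((g 1 0 : ℤ) : ℂ) * τ + (g 1 1 : ℤ)))
      ((((g 0 0 : ℤ) : ℂ) * τ + (g 0 1 : ℤ)) / (((g 1 0 : ℤ) : ℂ) * τ + (g 1 1 : ℤ))))
    (fun ν ⟨k, hk⟩ => by rw [hN _ ⟨k, hk.trans (by simp)⟩]; rfl)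
    (-Complex.log (((g 1 0 : ℤ) : ℂ) * τ + (g 1 1 : ℤ)))
  simp only [← add_assoc] at hshift
  simp only [← sub_div, hwp, hG]
  have hpow : (((g 1 0 : ℤ) : ℂ) * τ + (g 1 1 : ℤ)) ^ (-(a + 2)) =
      (((g 1 0 : ℤ) : ℂ) * τ + (g 1 1 : ℤ)) ^ (-a) / (((g 1 0 : ℤ) : ℂ) * τ + (g 1 1 : ℤ)) ^ 2 := by
    rw [neg_add', Complex.cpow_sub _ _ hJ, Complex.cpow_ofNat]
  rw [hpow]
  simp only [add_right_comm μ (Pi.single _ _) _]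
  exact sum_slash_identity _ Finset.univ _ hJ _ _ _ a _ _ _ _ _ _ _ z
    (fun i => wp1 (z i - z j) τ) hshift
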